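/- Let k be any field and R = k[t,u,x,y]/(xy − tu − 1) the coordinate ring of SL₂. Then R is an integral domain which is a unique factorisation domain, and the group of units of R is exactly the image of k* (i.e., R* = k*). -/

import Mathlib

open MvPolynomial

noncomputable section

/-- The polynomial `x*y - t*u - 1` defining `SL₂` inside `𝔸⁴ = Spec k[t,u,x,y]`
(variables: `0 = t`, `1 = u`, `2 = x`, `3 = y`). -/
def sl2Rel (k : Type*) [Field k] : MvPolynomial (Fin 4) k := X 2 * X 3 - X 0 * X 1 - 1

/-- The coordinate ring `R = k[t,u,x,y]/(xy - tu - 1)` of `SL₂`. -/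
abbrev SL2Ring (k : Type*) [Field k] : Type _ := MvPolynomial (Fin 4) k ⧸ Ideal.span {sl2Rel k}

/-! Put `A = k[u, x, y]`, so that `R = A[t] / (ut + 1 - xy)`. Inverting `u` makes `t` superfluous
and turns `R` into `A[u⁻¹]`, which is factorial. Moreover `u` stays prime in `R`, because
`R / u = (k[x, y] / (1 - xy))[t]` is a domain, so `R` is factorial by Nagata's criterion. A unit of
`R` is a unit of `A[u⁻¹]`, hence of the form `c uⁿ` with `c` a unit of `A` and `n` an integer, and
`n = 0` because `u` is not a unit of `R`. -/

open scoped Polynomial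

section AwayMap

variable {A B : Type*} [CommRing A] [CommRing B] [IsDomain B] {f : A →+* B} {a : A}

theorem uniqueFactorizationMonoid_of_awayMap_bijective [UniqueFactorizationMonoid A]
    [IsNoetherianRing B] (hfa : Prime (f a)) (hf : Function.Bijective (Localization.awayMap f a)) :
    UniqueFactorizationMonoid B :=
  (UniqueFactorizationMonoid.iff_localizationAway_of_prime hfa).2 <|
    (RingEquiv.ofBijective _ hf).toMulEquiv.uniqueFactorizationMonoid inferInstance

theorem isUnit_iff_exists_map_of_awayMap_surjective (hf : Function.Injective f) (ha : Prime a)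
    (hfa : ¬ IsUnit (f a)) (hsurj : Function.Surjective (Localization.awayMap f a))
    {r : B} : IsUnit r ↔ ∃ c, IsUnit c ∧ f c = r := by
  have : IsDomain A := hf.isDomain f
  refine ⟨fun hr ↦ ?_, fun ⟨c, hc, hcr⟩ ↦ hcr ▸ hc.map f⟩
  rw [Localization.awayMap_surjective_iff] at hsurj
  obtain ⟨s, hrs⟩ := hr.exists_right_inv
  obtain ⟨p, m, hp⟩ := hsurj r
  obtain ⟨q, n, hq⟩ := hsurj s
  have hpq : p * q = 1 * a ^ (m + n) := hf <| by
    simp only [map_mul, map_pow, map_one, hp, hq]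
    linear_combination f a ^ (m + n) * hrs
  obtain ⟨i, -, c, d, -, hcd, rfl, -⟩ := mul_eq_mul_prime_pow ha hpq
  have hc : IsUnit c := .of_mul_eq_one d hcd.symm
  have hfa0 : f a ≠ 0 := (map_ne_zero_iff f hf).2 ha.ne_zero
  rw [map_mul, map_pow] at hp
  have him : i = m := le_antisymm
    ((pow_dvd_pow_iff hfa0 hfa).1 (hr.dvd_mul_right.1 (hp ▸ dvd_mul_left _ _)))
    ((pow_dvd_pow_iff hfa0 hfa).1 ((hc.map f).dvd_mul_left.1 (hp ▸ dvd_mul_right _ _)))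
  subst him
  exact ⟨c, hc, mul_left_cancel₀ (pow_ne_zero i hfa0) (by rw [← hp, mul_comm])⟩

end AwayMap

/-- The ring `A[Y]/(aY + b)`. Over a factorial `A` with `a ≠ 0` and `b` coprime to `a` it is the
subring `A[b/a]` of the fraction field, the affine modification of `Spec A` along the divisor
`a = 0` with centre `a = b = 0`. The adjoined root is `-b/a`. -/
abbrev AffineModification {A : Type*} [CommRing A] (a b : A) : Type _ :=
  AdjoinRoot (Polynomial.C a * Polynomial.X + Polynomial.C b)

namespace AffineModification

section CommRing

variable {A : Type*} [CommRing A] (a b : A)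

theorem algebraMap_mul_root :
    algebraMap A (AffineModification a b) a * AdjoinRoot.root _ = -algebraMap A _ b := by
  have h := AdjoinRoot.eval₂_root (Polynomial.C a * Polynomial.X + Polynomial.C b)
  simp only [Polynomial.eval₂_add, Polynomial.eval₂_mul, Polynomial.eval₂_C,
    Polynomial.eval₂_X] at h
  exact eq_neg_of_add_eq_zero_left h

theorem awayMap_surjective :
    Function.Surjective (Localization.awayMap (algebraMap A (AffineModification a b)) a) := by
  rw [Localization.awayMap_surjective_iff]
  intro r
  induction r using AdjoinRoot.induction_on with | ih p => ?_
  induction p using Polynomial.induction_on with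
  | C c => exact ⟨c, 0, by simp⟩
  | add p q hp hq =>
    obtain ⟨c, m, hc⟩ := hp
    obtain ⟨d, n, hd⟩ := hq
    refine ⟨a ^ n * c + a ^ m * d, m + n, ?_⟩
    simp only [map_add, map_mul, map_pow, hc, hd]
    ring
  | monomial n c hc =>
    obtain ⟨d, m, hd⟩ := hc
    refine ⟨d * -b, m + 1, ?_⟩
    rw [map_mul, map_neg, hd, ← algebraMap_mul_root]
    simp only [pow_succ, map_mul, AdjoinRoot.mk_X]
    ring

end CommRing

section IsDomain

variable {A : Type*} [CommRing A] [IsDomain A] {a b : A}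

theorem algebraMap_injective (ha : a ≠ 0) :
    Function.Injective (algebraMap A (AffineModification a b)) :=
  AdjoinRoot.of.injective_of_degree_ne_zero (by simp [Polynomial.degree_linear ha])

theorem awayMap_bijective (ha : a ≠ 0) :
    Function.Bijective (Localization.awayMap (algebraMap A (AffineModification a b)) a) :=
  ⟨IsLocalization.map_injective_of_injective _ _ _ (algebraMap_injective ha),
    awayMap_surjective a b⟩

theorem prime_algebraMap (ha : a ≠ 0) (hb : Prime (Ideal.Quotient.mk (Ideal.span {a}) b)) :
    Prime (algebraMap A (AffineModification a b) a) := by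
  let e := AdjoinRoot.quotAdjoinRootEquivQuotPolynomialQuot (Ideal.span {a})
    (Polynomial.C a * Polynomial.X + Polynomial.C b)
  have hmap : (Polynomial.C a * Polynomial.X + Polynomial.C b).map
      (Ideal.Quotient.mk (Ideal.span {a})) = Polynomial.C (Ideal.Quotient.mk _ b) := by
    simp
  have hC := Polynomial.prime_C_iff.2 hb
  have hdom : IsDomain ((A ⧸ Ideal.span {a})[X] ⧸
      Ideal.span {Polynomial.C (Ideal.Quotient.mk (Ideal.span {a}) b)}) :=
    (Ideal.Quotient.isDomain_iff_prime _).2 ((Ideal.span_singleton_prime hC.ne_zero).2 hC)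
  rw [← Ideal.span_singleton_prime ((map_ne_zero_iff _ (algebraMap_injective ha)).2 ha),
    ← Set.image_singleton, ← Ideal.map_span, ← Ideal.Quotient.isDomain_iff_prime]
  rw [← hmap] at hdom
  exact e.toMulEquiv.isDomain_iff.2 hdom

theorem isUnit_iff [IsDomain (AffineModification a b)] (ha : Prime a)
    (hb : Prime (Ideal.Quotient.mk (Ideal.span {a}) b)) {r : AffineModification a b} :
    IsUnit r ↔ ∃ c, IsUnit c ∧ algebraMap A _ c = r :=
  isUnit_iff_exists_map_of_awayMap_surjective (algebraMap_injective ha.ne_zero) ha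
    (prime_algebraMap ha.ne_zero hb).not_isUnit (awayMap_surjective a b)

variable [UniqueFactorizationMonoid A]

theorem isDomain (ha : a ≠ 0) (hab : IsRelPrime a b) : IsDomain (AffineModification a b) :=
  AdjoinRoot.isDomain_of_prime (Polynomial.irreducible_C_mul_X_add_C ha hab).prime

theorem isDomain_of_prime (ha : Prime a) (hb : Prime (Ideal.Quotient.mk (Ideal.span {a}) b)) :
    IsDomain (AffineModification a b) :=
  isDomain ha.ne_zero <| ha.irreducible.isRelPrime_iff_not_dvd.2 fun hab ↦
    hb.ne_zero <| Ideal.Quotient.eq_zero_iff_mem.2 <| Ideal.mem_span_singleton.2 hab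

theorem uniqueFactorizationMonoid [IsNoetherianRing A] [IsDomain (AffineModification a b)]
    (ha : a ≠ 0) (hb : Prime (Ideal.Quotient.mk (Ideal.span {a}) b)) :
    UniqueFactorizationMonoid (AffineModification a b) :=
  uniqueFactorizationMonoid_of_awayMap_bijective (prime_algebraMap ha hb) (awayMap_bijective ha)

end IsDomain

end AffineModification

section PrimeModX

theorem prime_mk_ker_iff {A B : Type*} [CommRing A] [CommRing B] {f : A →+* B}
    (hf : Function.Surjective f) {b : A} :
    Prime (Ideal.Quotient.mk (RingHom.ker f) b) ↔ Prime (f b) :=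
  (MulEquiv.prime_iff (RingHom.quotientKerEquivOfSurjective hf)).symm

theorem ker_constantCoeff_comp_finSuccEquiv (k : Type*) [CommRing k] (n : ℕ) :
    RingHom.ker (Polynomial.constantCoeff.comp
      (finSuccEquiv k n : MvPolynomial (Fin (n + 1)) k →+* (MvPolynomial (Fin n) k)[X])) =
      Ideal.span {X 0} := by
  rw [← RingHom.comap_ker, Polynomial.ker_constantCoeff]
  change Ideal.comap (finSuccEquiv k n).toRingEquiv _ = _
  rw [← Ideal.map_symm, Ideal.map_span, Set.image_singleton,
    ← finSuccEquiv_X_zero (R := k) (n := n)]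
  simp

variable (k : Type*) [CommRing k] [IsDomain k] [UniqueFactorizationMonoid k]

theorem prime_one_sub_X_mul_X {σ : Type*} {i j : σ} (hij : i ≠ j) :
    Prime (1 - X i * X j : MvPolynomial σ k) := by
  have h := irreducible_mul_X_add (-X i) 1 j (neg_ne_zero.2 (X_ne_zero (R := k) i))
    (by simpa [vars_X] using hij.symm) (by simp) isRelPrime_one_right
  convert h.prime using 1
  ring

theorem prime_mk_one_sub_X_mul_X :
    Prime (Ideal.Quotient.mk (Ideal.span {(X 0 : MvPolynomial (Fin 3) k)}) (1 - X 1 * X 2)) := by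
  have hX₁ : finSuccEquiv k 2 (X 1) = Polynomial.C (X 0) := finSuccEquiv_X_succ (j := 0)
  have hX₂ : finSuccEquiv k 2 (X 2) = Polynomial.C (X 1) := finSuccEquiv_X_succ (j := 1)
  rw [← ker_constantCoeff_comp_finSuccEquiv, prime_mk_ker_iff
    (Polynomial.constantCoeff_surjective.comp (finSuccEquiv k 2).surjective)]
  simpa [hX₁, hX₂] using prime_one_sub_X_mul_X k (zero_ne_one (α := Fin 2))

end PrimeModX

/-- The coordinate ring of `SL₂` over an arbitrary commutative ring; over a field it is
definitionally `SL2Ring k`. -/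
abbrev SL2CoordinateRing (k : Type*) [CommRing k] : Type _ :=
  MvPolynomial (Fin 4) k ⧸ Ideal.span {(X 2 * X 3 - X 0 * X 1 - 1 : MvPolynomial (Fin 4) k)}

section SL2CoordinateRing

variable (k : Type*) [CommRing k]

theorem finSuccEquiv_X_mul_X_sub_X_mul_X_sub_one :
    finSuccEquiv k 3 (X 2 * X 3 - X 0 * X 1 - 1) =
      -(Polynomial.C (X 0) * Polynomial.X + Polynomial.C (1 - X 1 * X 2)) := by
  have hX₁ : finSuccEquiv k 3 (X 1) = Polynomial.C (X 0) := finSuccEquiv_X_succ (j := 0)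
  have hX₂ : finSuccEquiv k 3 (X 2) = Polynomial.C (X 1) := finSuccEquiv_X_succ (j := 1)
  have hX₃ : finSuccEquiv k 3 (X 3) = Polynomial.C (X 2) := finSuccEquiv_X_succ (j := 2)
  simp only [map_sub, map_mul, map_one, finSuccEquiv_X_zero, hX₁, hX₂, hX₃]
  ring

/-- The coordinate ring of `SL₂` as an affine modification of `k[u, x, y]`: the adjoined root is
`t`, and the variables `u, x, y` are renumbered to `X 0, X 1, X 2`. -/
def sl2CoordinateRingEquiv :
    SL2CoordinateRing k ≃ₐ[k] AffineModification (X 0 : MvPolynomial (Fin 3) k) (1 - X 1 * X 2) :=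
  Ideal.quotientEquivAlg _ _ (finSuccEquiv k 3) <| by
    rw [← Ideal.span_singleton_neg, ← finSuccEquiv_X_mul_X_sub_X_mul_X_sub_one, Ideal.map_span,
      Set.image_singleton]
    rfl

theorem SL2Ring_isUFD_and_units_general [IsDomain k] [IsNoetherianRing k]
    [UniqueFactorizationMonoid k] :
    ∃ hd : IsDomain (SL2CoordinateRing k),
      (letI := hd; UniqueFactorizationMonoid (SL2CoordinateRing k)) ∧
      (∀ r : SL2CoordinateRing k,
        IsUnit r ↔ ∃ c : k, IsUnit c ∧ algebraMap k (SL2CoordinateRing k) c = r) := by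
  have hu : Prime (X 0 : MvPolynomial (Fin 3) k) := X_prime
  have hxy := prime_mk_one_sub_X_mul_X k
  have hdom := AffineModification.isDomain_of_prime hu hxy
  have hufd := AffineModification.uniqueFactorizationMonoid hu.ne_zero hxy
  let e := sl2CoordinateRingEquiv k
  refine ⟨e.toMulEquiv.isDomain_iff.2 hdom, e.symm.toMulEquiv.uniqueFactorizationMonoid hufd,
    fun r ↦ ⟨fun hr ↦ ?_, fun ⟨c, hc, hcr⟩ ↦ hcr ▸ hc.map _⟩⟩
  obtain ⟨p, hp, hpr⟩ := (AffineModification.isUnit_iff hu hxy).1 (hr.map e)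
  obtain ⟨c, hc, rfl⟩ := isUnit_iff_eq_C_of_isReduced.1 hp
  exact ⟨c, hc, e.injective ((e.commutes c).trans hpr)⟩

end SL2CoordinateRing

/-- **Lemma 4.3 (Blanc–van Santen).** The coordinate ring `R = k[t,u,x,y]/(xy − tu − 1)` of
`SL₂` is an integral domain which is a unique factorisation domain, and its units are exactly
the images of the nonzero elements of `k`. -/
theorem SL2Ring_isUFD_and_units (k : Type*) [Field k] :
    ∃ hd : IsDomain (SL2Ring k),
      (letI := hd; UniqueFactorizationMonoid (SL2Ring k)) ∧
      (∀ r : SL2Ring k, IsUnit r ↔ ∃ c : k, c ≠ 0 ∧ algebraMap k (SL2Ring k) c = r) := by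
  simp only [← isUnit_iff_ne_zero]
  exact SL2Ring_isUFD_and_units_general k
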